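/- Let 𝒢 = (V,E) be a simple directed graph and let C ⊆ V. Then 𝒢 is identifiable from C if and only if for every i ∈ V and every admissible network matrix G over ℝ(z), the submatrix T_{C, N_i} of T := (I − G)⁻¹ has rank |N_i| over the field ℝ(z). -/

import Mathlib

open Polynomial Matrix

noncomputable section

/-- A rational function `f ∈ ℝ(z)` is *proper* if the degree of its numerator is at most
the degree of its denominator. -/
def Proper (f : RatFunc ℝ) : Prop := f.num.degree ≤ f.denom.degree

/-- A rational function `f ∈ ℝ(z)` is *strictly proper* if the degree of its numerator is
strictly less than the degree of its denominator. -/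
def StrictlyProper (f : RatFunc ℝ) : Prop := f.num.degree < f.denom.degree

/-- The (finite) limit at infinity of a proper rational function: the ratio of leading
coefficients when the degrees of numerator and denominator coincide, and `0` otherwise. -/
def limAtInfty (f : RatFunc ℝ) : ℝ :=
  if f.num.degree = f.denom.degree then f.num.leadingCoeff / f.denom.leadingCoeff else 0

/-- The set `N_i` of out-neighbours of node `i` in the directed graph with edge set `E`. -/
def Nout {n : ℕ} (E : Finset (Fin n × Fin n)) (i : Fin n) : Finset (Fin n) :=
  Finset.univ.filter fun j => (i, j) ∈ E

/-- The real matrix `lim_{z→∞} (I - G(z))`, taken entrywise. -/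
def limMatrix {n : ℕ} (G : Matrix (Fin n) (Fin n) (RatFunc ℝ)) : Matrix (Fin n) (Fin n) ℝ :=
  Matrix.of fun a b => limAtInfty ((1 - G) a b)

/-- A network matrix `G` over `ℝ(z)` is *admissible* for the graph with edge set `E` if
(P1) every entry is proper, (P2) `G j i ≠ 0` iff `(i,j) ∈ E`, and
(P3) every principal minor of `lim_{z→∞}(I - G(z))` is nonzero. -/
def Admissible {n : ℕ} (E : Finset (Fin n × Fin n))
    (G : Matrix (Fin n) (Fin n) (RatFunc ℝ)) : Prop :=
  (∀ i j : Fin n, Proper (G j i)) ∧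
  (∀ i j : Fin n, G j i ≠ 0 ↔ (i, j) ∈ E) ∧
  (∀ S : Finset (Fin n),
    ((limMatrix G).submatrix (fun x : {v // v ∈ S} => (x : Fin n))
      (fun x : {v // v ∈ S} => (x : Fin n))).det ≠ 0)

/-- The rows of `A` and `B` indexed by the subset `C` agree, i.e. `C·A = C·B` where `C`
also denotes the selection matrix of `C`. -/
def rowsAgree {n : ℕ} (C : Finset (Fin n)) (A B : Matrix (Fin n) (Fin n) (RatFunc ℝ)) : Prop :=
  A.submatrix (fun c : {v // v ∈ C} => (c : Fin n)) id
    = B.submatrix (fun c : {v // v ∈ C} => (c : Fin n)) id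

/-- `(i, N_i)` is identifiable from the measured node set `C`. -/
def IdentifiableNode {n : ℕ} (E : Finset (Fin n × Fin n)) (i : Fin n)
    (C : Finset (Fin n)) : Prop :=
  ∀ G Gbar : Matrix (Fin n) (Fin n) (RatFunc ℝ),
    Admissible E G → Admissible E Gbar →
    rowsAgree C (1 - G)⁻¹ (1 - Gbar)⁻¹ → ∀ j : Fin n, G j i = Gbar j i

/-- The graph is identifiable from the measured node set `C`. -/
def IdentifiableGraph {n : ℕ} (E : Finset (Fin n × Fin n)) (C : Finset (Fin n)) : Prop :=
  ∀ G Gbar : Matrix (Fin n) (Fin n) (RatFunc ℝ),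
    Admissible E G → Admissible E Gbar →
    rowsAgree C (1 - G)⁻¹ (1 - Gbar)⁻¹ → G = Gbar

/-!
Let `v` be the valuation at infinity. A rational function is proper iff `v f ≤ 1`, and taking limits
is reduction modulo the ideal `v f < 1`; so (P3) says that the principal minors of `I - G` have
valuation `1`, and admissibility survives any perturbation of the nonzero entries of `G` by terms of
strictly smaller valuation.

For two admissible matrices, `C (I - G)⁻¹ = C (I - H)⁻¹` is equivalent to `C (I - G)⁻¹ (G - H) = 0`.
Column `i` of `G - H` is supported on `N_i`, so it vanishes when the columns of `T_{C, N_i}` are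
independent. Conversely, a nonzero kernel vector of `T_{C, N_i}`, scaled to be small at infinity and
added to column `i` of `G`, gives a second admissible matrix with the same measured rows.
-/

section LinearAlgebra

variable {l m n : Type*} [Fintype n]

theorem rank_submatrix_val_eq_card_iff {K : Type*} [Field K] (A : Matrix l n K) (r : m → l)
    (s : Finset n) :
    (A.submatrix r ((↑) : {j // j ∈ s} → n)).rank = s.card ↔
      ∀ x : n → K, (∀ j ∉ s, x j = 0) → A.submatrix r id *ᵥ x = 0 → x = 0 := by
  have mulVec_eq_sum {x : n → K} (hx : ∀ j ∉ s, x j = 0) :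
      A.submatrix r id *ᵥ x = ∑ j ∈ s, x j • (A.submatrix r id).col j := by
    simp only [Matrix.mulVec_eq_sum, op_smul_eq_smul]
    refine (Finset.sum_subset s.subset_univ fun j _ hj => ?_).symm
    rw [hx j hj, zero_smul]
  rw [Matrix.rank_eq_finrank_span_cols, ← Fintype.card_coe s, eq_comm]
  refine linearIndependent_iff_card_eq_finrank_span.symm.trans ?_
  change LinearIndepOn K (A.submatrix r id).col (s : Set n) ↔ _
  rw [linearIndepOn_finset_iff]
  constructor
  · intro h x hx hAx
    ext j
    by_cases hj : j ∈ s
    · exact h x (mulVec_eq_sum hx ▸ hAx) j hj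
    · exact hx j hj
  · classical
    intro h f hf j hj
    let x : n → K := fun j => if j ∈ s then f j else 0
    have hx : ∀ j ∉ s, x j = 0 := fun j hj => if_neg hj
    have hAx : A.submatrix r id *ᵥ x = 0 := by
      rw [mulVec_eq_sum hx, ← hf]
      exact Finset.sum_congr rfl fun j hj => by simp [x, hj]
    simpa [x, hj] using congrFun (h x hx hAx) j

theorem submatrix_inv_eq_submatrix_inv_iff {R : Type*} [CommRing R] [DecidableEq n]
    {A B : Matrix n n R} (hA : IsUnit A.det) (hB : IsUnit B.det) (r : m → n) :
    A⁻¹.submatrix r id = B⁻¹.submatrix r id ↔ A⁻¹.submatrix r id * (B - A) = 0 := by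
  have hAA : A⁻¹.submatrix r id * A = (1 : Matrix n n R).submatrix r id :=
    congrArg (·.submatrix r id) (A.nonsing_inv_mul hA)
  have hBB : B⁻¹.submatrix r id * B = (1 : Matrix n n R).submatrix r id :=
    congrArg (·.submatrix r id) (B.nonsing_inv_mul hB)
  rw [Matrix.mul_sub, hAA, ← hBB, sub_eq_zero]
  exact (Matrix.mul_left_injective_of_inv B B⁻¹ (B.mul_nonsing_inv hB)).eq_iff.symm

end LinearAlgebra

section Valuation

variable {K Γ₀ : Type*} [Field K] [LinearOrderedCommGroupWithZero Γ₀] (v : Valuation K Γ₀)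

theorem exists_ne_zero_forall_valuation_lt [v.IsNontrivial] {ι : Type*} (s : Finset ι)
    {a : ι → K} (ha : ∀ j ∈ s, a j ≠ 0) : ∃ t ≠ 0, ∀ j ∈ s, v t < v (a j) := by
  obtain rfl | hs := s.eq_empty_or_nonempty
  · exact ⟨1, one_ne_zero, by simp⟩
  obtain ⟨k, hk, hmin⟩ := s.exists_min_image (fun j => v (a j)) hs
  obtain ⟨t, ht, hvt⟩ := Valuation.IsNontrivial.exists_lt_one (v := v)
  have ht0 : t ≠ 0 := by simpa using ht
  refine ⟨t * a k, mul_ne_zero ht0 (ha k hk), fun j hj => ?_⟩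
  calc v (t * a k) = v t * v (a k) := map_mul v t (a k)
    _ < v (a k) := mul_lt_of_lt_one_left (v.pos_iff.2 (ha k hk)) hvt
    _ ≤ v (a j) := hmin j hj

variable {v} {m : Type*} [Fintype m] [DecidableEq m]

theorem valuation_det_sub_det_lt_one {A B : Matrix m m K} (hB : ∀ i j, v (B i j) ≤ 1)
    (hAB : ∀ i j, v (A i j - B i j) < 1) : v (A.det - B.det) < 1 := by
  have hA (i j : m) : v (A i j) ≤ 1 := by
    simpa using v.map_add_le (hAB i j).le (hB i j)
  let A' : Matrix m m v.valuationSubring := .of fun i j => ⟨A i j, hA i j⟩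
  let B' : Matrix m m v.valuationSubring := .of fun i j => ⟨B i j, hB i j⟩
  have hres : A'.map (IsLocalRing.residue _) = B'.map (IsLocalRing.residue _) := by
    ext i j
    exact Ideal.Quotient.eq.2 ((v.mem_maximalIdeal_iff K).2 (hAB i j))
  have hdet : IsLocalRing.residue _ A'.det = IsLocalRing.residue _ B'.det := by
    rw [RingHom.map_det, RingHom.map_det, RingHom.mapMatrix_apply, hres, RingHom.mapMatrix_apply]
  have hcoe : A.det - B.det = v.valuationSubring.subtype (A'.det - B'.det) := by
    rw [map_sub, RingHom.map_det, RingHom.map_det]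
    rfl
  rw [hcoe]
  exact (v.mem_maximalIdeal_iff K).1 (Ideal.Quotient.eq.1 hdet)

variable {k : Type*} [Field k] [Algebra k K] [v.IsTrivialOn k]

theorem valuation_eq_one_iff_of_sub_algebraMap_lt_one {x : K} {c : k}
    (h : v (x - algebraMap k K c) < 1) : v x = 1 ↔ c ≠ 0 := by
  constructor
  · rintro hx rfl
    simp [hx] at h
  · intro hc
    have hvc : v (algebraMap k K c) = 1 := Valuation.IsTrivialOn.eq_one c hc
    rw [v.map_eq_of_sub_lt (hvc.symm ▸ h), hvc]

theorem valuation_det_eq_one_iff {A : Matrix m m K} {B : Matrix m m k}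
    (h : ∀ i j, v (A i j - algebraMap k K (B i j)) < 1) : v A.det = 1 ↔ B.det ≠ 0 := by
  apply valuation_eq_one_iff_of_sub_algebraMap_lt_one
  rw [RingHom.map_det]
  exact valuation_det_sub_det_lt_one
    (fun i j => Valuation.IsTrivialOn.valuation_algebraMap_le_one v (B i j)) h

end Valuation

section ValuedNetwork

variable {K Γ₀ V : Type*} [Field K] [LinearOrderedCommGroupWithZero Γ₀] [DecidableEq V]

theorem valuation_one_sub_apply_le_one {v : Valuation K Γ₀} {G : Matrix V V K}
    (hG : ∀ i j, v (G j i) ≤ 1) (i j : V) : v ((1 - G) i j) ≤ 1 := by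
  refine v.map_sub_le ?_ (hG j i)
  rw [Matrix.one_apply]
  split_ifs <;> simp

/-- Admissible network matrices over a valued field, for the directed graph with out-neighbourhoods
`N i` (self-loops allowed). The conditions are (P1), (P2) and (P3), with "proper" read as `v f ≤ 1`
and "nonzero limit" as `v f = 1`. As in `Admissible`, the edge from `i` to `j` is carried by the
entry `G j i`. -/
structure ValuedAdmissible (v : Valuation K Γ₀) (N : V → Finset V) (G : Matrix V V K) : Prop where
  le_one : ∀ i j, v (G j i) ≤ 1
  ne_zero_iff : ∀ i j, G j i ≠ 0 ↔ j ∈ N i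
  minor_eq_one : ∀ S : Finset V,
    v ((1 - G).submatrix ((↑) : {a // a ∈ S} → V) ((↑) : {a // a ∈ S} → V)).det = 1

/-- Identifiability from the measured nodes `C` of the graph with out-neighbourhoods `N i`, among
the admissible network matrices over a valued field. -/
def ValuedIdentifiable [Fintype V] (v : Valuation K Γ₀) (N : V → Finset V) (C : Finset V) : Prop :=
  ∀ G H : Matrix V V K, ValuedAdmissible v N G → ValuedAdmissible v N H →
    (1 - G)⁻¹.submatrix ((↑) : {c // c ∈ C} → V) id =
      (1 - H)⁻¹.submatrix ((↑) : {c // c ∈ C} → V) id → G = H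

namespace ValuedAdmissible

variable {v : Valuation K Γ₀} {N : V → Finset V} {G : Matrix V V K}

theorem apply_eq_zero (hG : ValuedAdmissible v N G) {i j : V} (hj : j ∉ N i) : G j i = 0 := by
  simpa [hj] using hG.ne_zero_iff i j

theorem det_one_sub_ne_zero [Fintype V] (hG : ValuedAdmissible v N G) : (1 - G).det ≠ 0 := by
  have h := hG.minor_eq_one Finset.univ
  have e := Matrix.det_submatrix_equiv_self
    (Equiv.subtypeUnivEquiv fun a : V => Finset.mem_univ a) (1 - G)
  rw [← v.ne_zero_iff, ← e]
  exact h.trans_ne one_ne_zero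

theorem add_of_forall_valuation_lt {D : Matrix V V K} (hG : ValuedAdmissible v N G)
    (hD : ∀ i j, D j i ≠ 0 → v (D j i) < v (G j i)) : ValuedAdmissible v N (G + D) := by
  have hval (i j : V) : v ((G + D) j i) = v (G j i) := by
    by_cases h : D j i = 0
    · simp [h]
    · exact v.map_add_eq_of_lt_left (hD i j h)
  have hD1 (i j : V) : v (D j i) < 1 := by
    by_cases h : D j i = 0
    · simp [h]
    · exact (hD i j h).trans_le (hG.le_one i j)
  refine ⟨fun i j => (hval i j).trans_le (hG.le_one i j), fun i j => ?_, fun S => ?_⟩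
  · rw [← v.ne_zero_iff, hval, v.ne_zero_iff, hG.ne_zero_iff]
  · rw [← hG.minor_eq_one S]
    apply v.map_eq_of_sub_lt
    rw [hG.minor_eq_one S]
    refine valuation_det_sub_det_lt_one
      (fun _ _ => valuation_one_sub_apply_le_one hG.le_one _ _) fun a b => ?_
    simpa using hD1 b a

theorem exists_add_vecMulVec_single [v.IsNontrivial] (hG : ValuedAdmissible v N G) {i : V}
    {x : V → K} (hx : ∀ j ∉ N i, x j = 0) :
    ∃ t : K, t ≠ 0 ∧ ValuedAdmissible v N (G + vecMulVec (t • x) (Pi.single i 1)) := by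
  classical
  have hGx {j : V} (hj : x j ≠ 0) : G j i ≠ 0 :=
    (hG.ne_zero_iff i j).2 (not_imp_comm.1 (hx j) hj)
  obtain ⟨t, ht, hlt⟩ := exists_ne_zero_forall_valuation_lt v {j ∈ N i | x j ≠ 0}
    (a := fun j => G j i / x j) fun j hj =>
      div_ne_zero (hGx (Finset.mem_filter.1 hj).2) (Finset.mem_filter.1 hj).2
  refine ⟨t, ht, hG.add_of_forall_valuation_lt fun l j hD => ?_⟩
  obtain rfl | hl := eq_or_ne l i
  · have hj : x j ≠ 0 := by
      intro hj
      simp [vecMulVec_apply, hj] at hD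
    have hlt_j := hlt j (Finset.mem_filter.2 ⟨not_imp_comm.1 (hx j) hj, hj⟩)
    rw [map_div₀, lt_div_iff₀ (v.pos_iff.2 hj)] at hlt_j
    simpa [vecMulVec_apply] using hlt_j
  · simp [vecMulVec_apply, hl] at hD

theorem submatrix_inv_eq_iff [Fintype V] {H : Matrix V V K} (hG : ValuedAdmissible v N G)
    (hH : ValuedAdmissible v N H) {ι : Type*} (r : ι → V) :
    (1 - G)⁻¹.submatrix r id = (1 - H)⁻¹.submatrix r id ↔
      (1 - G)⁻¹.submatrix r id * (G - H) = 0 := by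
  rw [submatrix_inv_eq_submatrix_inv_iff hG.det_one_sub_ne_zero.isUnit
    hH.det_one_sub_ne_zero.isUnit, sub_sub_sub_cancel_left]

end ValuedAdmissible

theorem graph_identifiability_iff_rank_general [Fintype V] (v : Valuation K Γ₀) [v.IsNontrivial]
    (N : V → Finset V) (C : Finset V) :
    ValuedIdentifiable v N C ↔
      ∀ i : V, ∀ G : Matrix V V K, ValuedAdmissible v N G →
        ((1 - G)⁻¹.submatrix ((↑) : {c // c ∈ C} → V) ((↑) : {j // j ∈ N i} → V)).rank =
          (N i).card := by
  simp only [rank_submatrix_val_eq_card_iff]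
  constructor
  · intro hid i G hG x hx hTx
    obtain ⟨t, ht, hH⟩ := hG.exists_add_vecMulVec_single hx
    have hrows := (hG.submatrix_inv_eq_iff hH ((↑) : {c // c ∈ C} → V)).2 <| by
      simp [Matrix.mul_vecMulVec, hTx]
    simpa [ht] using hid G _ hG hH hrows
  · intro h G H hG hH hrows
    have hker := (hG.submatrix_inv_eq_iff hH _).1 hrows
    ext j i
    have hcol : (G - H).col i = 0 := by
      refine h i G hG _ (fun l hl => ?_) (congrArg (·.col i) hker)
      simp [hG.apply_eq_zero hl, hH.apply_eq_zero hl]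
    exact sub_eq_zero.1 (congrFun hcol j)

end ValuedNetwork

section RationalFunctions

theorem inftyValuation_algebraMap_div_lt_one {F : Type*} [Field F] [DecidableEq (RatFunc F)]
    {p q : F[X]} (h : p.degree < q.degree) :
    RatFunc.inftyValuation F (algebraMap F[X] (RatFunc F) p / algebraMap F[X] (RatFunc F) q) <
      1 := by
  obtain rfl | hp := eq_or_ne p 0
  · simp
  have hq : q ≠ 0 := Polynomial.ne_zero_of_degree_gt h
  rw [map_div₀, RatFunc.inftyValuation_apply, RatFunc.inftyValuation_apply,
    RatFunc.inftyValuation.polynomial F hp, RatFunc.inftyValuation.polynomial F hq,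
    ← WithZero.exp_sub, ← WithZero.exp_zero, WithZero.exp_lt_exp]
  have hdeg := Polynomial.natDegree_lt_natDegree hp h
  omega

theorem degree_num_sub_C_limAtInfty_mul_denom_lt {f : RatFunc ℝ} (hf : Proper f) :
    (f.num - Polynomial.C (limAtInfty f) * f.denom).degree < f.denom.degree := by
  unfold limAtInfty
  split_ifs with h
  · have hnum : f.num ≠ 0 := by
      rw [← Polynomial.degree_ne_bot, h, Polynomial.degree_ne_bot]
      exact f.denom_ne_zero
    rw [f.monic_denom.leadingCoeff, div_one, ← h]
    refine Polynomial.degree_sub_lt_left ?_ hnum (by simp [f.monic_denom.leadingCoeff])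
    rw [Polynomial.degree_C_mul (Polynomial.leadingCoeff_ne_zero.2 hnum), h]
  · simpa using lt_of_le_of_ne hf h

variable [DecidableEq (RatFunc ℝ)]

theorem proper_iff_inftyValuation_le_one {f : RatFunc ℝ} :
    Proper f ↔ RatFunc.inftyValuation ℝ f ≤ 1 := by
  obtain rfl | hf := eq_or_ne f 0
  · simp [Proper]
  rw [Proper, RatFunc.inftyValuation_apply, RatFunc.inftyValuation_of_nonzero ℝ hf,
    ← WithZero.exp_zero, WithZero.exp_le_exp, RatFunc.intDegree,
    Polynomial.degree_eq_natDegree (RatFunc.num_ne_zero hf),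
    Polynomial.degree_eq_natDegree f.denom_ne_zero, Nat.cast_le]
  omega

theorem inftyValuation_sub_limAtInfty_lt_one {f : RatFunc ℝ} (hf : Proper f) :
    RatFunc.inftyValuation ℝ (f - algebraMap ℝ (RatFunc ℝ) (limAtInfty f)) < 1 := by
  have hdenom : algebraMap ℝ[X] (RatFunc ℝ) f.denom ≠ 0 := by simpa using f.denom_ne_zero
  have hsub : f - algebraMap ℝ (RatFunc ℝ) (limAtInfty f) =
      algebraMap ℝ[X] (RatFunc ℝ) (f.num - Polynomial.C (limAtInfty f) * f.denom) /
        algebraMap ℝ[X] (RatFunc ℝ) f.denom := by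
    rw [RatFunc.algebraMap_eq_C, map_sub, map_mul, RatFunc.algebraMap_C, sub_div,
      RatFunc.num_div_denom, mul_div_cancel_right₀ _ hdenom]
  rw [hsub]
  exact inftyValuation_algebraMap_div_lt_one (degree_num_sub_C_limAtInfty_mul_denom_lt hf)

variable {n : ℕ} {E : Finset (Fin n × Fin n)}

theorem inftyValuation_det_submatrix_one_sub_eq_one_iff {G : Matrix (Fin n) (Fin n) (RatFunc ℝ)}
    (hG : ∀ i j, RatFunc.inftyValuation ℝ (G j i) ≤ 1) {m : Type*} [Fintype m] [DecidableEq m]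
    (e : m → Fin n) :
    RatFunc.inftyValuation ℝ ((1 - G).submatrix e e).det = 1 ↔
      ((limMatrix G).submatrix e e).det ≠ 0 :=
  valuation_det_eq_one_iff fun a b => inftyValuation_sub_limAtInfty_lt_one <|
    proper_iff_inftyValuation_le_one.2 (valuation_one_sub_apply_le_one hG (e a) (e b))

theorem admissible_iff_valuedAdmissible {G : Matrix (Fin n) (Fin n) (RatFunc ℝ)} :
    Admissible E G ↔ ValuedAdmissible (RatFunc.inftyValuation ℝ) (Nout E) G := by
  have support_iff (i j : Fin n) : (G j i ≠ 0 ↔ j ∈ Nout E i) ↔ (G j i ≠ 0 ↔ (i, j) ∈ E) := by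
    simp [Nout]
  simp only [Admissible, proper_iff_inftyValuation_le_one]
  constructor
  · rintro ⟨hproper, hsupp, hminor⟩
    exact ⟨hproper, fun i j => (support_iff i j).2 (hsupp i j),
      fun S => (inftyValuation_det_submatrix_one_sub_eq_one_iff hproper _).2 (hminor S)⟩
  · rintro ⟨hproper, hsupp, hminor⟩
    exact ⟨hproper, fun i j => (support_iff i j).1 (hsupp i j),
      fun S => (inftyValuation_det_submatrix_one_sub_eq_one_iff hproper _).1 (hminor S)⟩

theorem identifiableGraph_iff_valuedIdentifiable {C : Finset (Fin n)} :
    IdentifiableGraph E C ↔ ValuedIdentifiable (RatFunc.inftyValuation ℝ) (Nout E) C := by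
  simp only [IdentifiableGraph, ValuedIdentifiable, admissible_iff_valuedAdmissible, rowsAgree]

end RationalFunctions

/-- The graph `𝒢` is identifiable from `C` if and only if for every `i ∈ V`
and every admissible network matrix `G`, the submatrix `T_{C, N_i}` of `T = (I - G)⁻¹` has
rank `|N_i|` over `ℝ(z)`. -/
theorem graph_identifiability_iff_rank (n : ℕ) (E : Finset (Fin n × Fin n))
    (hsimple : ∀ v : Fin n, (v, v) ∉ E) (C : Finset (Fin n)) :
    IdentifiableGraph E C ↔
      ∀ i : Fin n, ∀ G : Matrix (Fin n) (Fin n) (RatFunc ℝ), Admissible E G →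
        (((1 - G)⁻¹).submatrix (fun c : {v // v ∈ C} => (c : Fin n))
          (fun j : {v // v ∈ Nout E i} => (j : Fin n))).rank = (Nout E i).card := by
  classical
  simpa only [admissible_iff_valuedAdmissible, identifiableGraph_iff_valuedIdentifiable] using
    graph_identifiability_iff_rank_general (RatFunc.inftyValuation ℝ) (Nout E) C
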